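/- Let (A,m) be a free multiarrangement with a locally heavy hyperplane H_0 = ker(α_0) and m_0 = m(H_0). Then there exists a homogeneous basis θ'_1, ..., θ'_ℓ of D(A,m) and an index j such that θ'_j(α_0) = α_0^{m_0}, θ'_i(α_0) = 0 for all i ≠ j, and the restrictions of {θ'_i : i ≠ j} to H_0 form a basis of the free module D(A^{H_0}, m^{H_0}) of the Euler–Ziegler restriction. -/

import Mathlib

open scoped Classical
open MvPolynomial

namespace ArrPaper

variable {K : Type*} [Field K] {ℓ : ℕ}

/-- The coordinate ring `S = K[x₁,…,x_ℓ]`. -/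
noncomputable abbrev S (K : Type*) [Field K] (ℓ : ℕ) := MvPolynomial (Fin ℓ) K

/-- The linear form associated to a covector `c`. -/
noncomputable def linForm (c : Fin ℓ → K) : S K ℓ :=
  ∑ i, MvPolynomial.C (c i) * MvPolynomial.X i

/-- The linear functional associated to a covector. -/
noncomputable def toFunc (c : Fin ℓ → K) : (Fin ℓ → K) →ₗ[K] K :=
  ∑ i, c i • LinearMap.proj i

/-- A (central) hyperplane arrangement, given by a finite set of nonzero,
pairwise non-proportional covectors (defining linear forms). -/
structure Arrangement (K : Type*) [Field K] (ℓ : ℕ) where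
  hyps : Finset (Fin ℓ → K)
  ne_zero : ∀ c ∈ hyps, c ≠ 0
  nonparallel : ∀ c ∈ hyps, ∀ c' ∈ hyps, c ≠ c' → ∀ t : K, c' ≠ t • c

/-- Derivations of the polynomial ring `S`. -/
abbrev Der (K : Type*) [Field K] (ℓ : ℕ) := Derivation K (S K ℓ) (S K ℓ)

/-- `θ` is a logarithmic derivation of the multiarrangement `(A, m)`, i.e.
`θ(α_H) ∈ α_H^{m(H)}·S` for all `H ∈ A`. -/
def IsLogDer (A : Arrangement K ℓ) (m : (Fin ℓ → K) → ℕ) (θ : Der K ℓ) : Prop :=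
  ∀ c ∈ A.hyps, (linForm c) ^ (m c) ∣ θ (linForm c)

/-- `θ` is homogeneous of polynomial degree `d`: `θ(α)` is homogeneous of degree `d`
for every linear form `α`. -/
def IsHomogOfDeg (θ : Der K ℓ) (d : ℕ) : Prop :=
  ∀ c : Fin ℓ → K, (θ (linForm c)).IsHomogeneous d

/-- `θ₁, …, θ_ℓ` form a basis of the `S`-module `D(A,m)`. -/
def IsDerBasis (A : Arrangement K ℓ) (m : (Fin ℓ → K) → ℕ) (θ : Fin ℓ → Der K ℓ) : Prop :=
  (∀ i, IsLogDer A m (θ i)) ∧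
  ∀ η : Der K ℓ, IsLogDer A m η → ∃! f : Fin ℓ → S K ℓ, η = ∑ i, f i • θ i

/-- `(A,m)` is free with a homogeneous basis of degrees (exponents) `d`. -/
def IsFreeWithExp (A : Arrangement K ℓ) (m : (Fin ℓ → K) → ℕ) (d : Fin ℓ → ℕ) : Prop :=
  ∃ θ : Fin ℓ → Der K ℓ, (∀ i, IsHomogOfDeg (θ i) (d i)) ∧ IsDerBasis A m θ

/-- `(A,m)` is a free multiarrangement. -/
def IsFree (A : Arrangement K ℓ) (m : (Fin ℓ → K) → ℕ) : Prop :=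
  ∃ d : Fin ℓ → ℕ, IsFreeWithExp A m d

/-- `|m|`, the total multiplicity. -/
def msum (A : Arrangement K ℓ) (m : (Fin ℓ → K) → ℕ) : ℕ := ∑ c ∈ A.hyps, m c

/-- The rank of an arrangement: the dimension of the span of its covectors. -/
noncomputable def rank (A : Arrangement K ℓ) : ℕ :=
  Module.finrank K (Submodule.span K (A.hyps : Set (Fin ℓ → K)))

/-- `A` is reducible: after a linear change of coordinates it is a product of two
arrangements in complementary (nonzero) subspaces.  In terms of covectors: the
covectors split between two complementary nonzero subspaces of the dual space. -/
def Reducible (A : Arrangement K ℓ) : Prop :=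
  ∃ W₁ W₂ : Submodule K (Fin ℓ → K), W₁ ≠ ⊥ ∧ W₂ ≠ ⊥ ∧ W₁ ⊓ W₂ = ⊥ ∧ W₁ ⊔ W₂ = ⊤ ∧
    ∀ c ∈ A.hyps, c ∈ W₁ ∨ c ∈ W₂

/-- The hyperplanes of the localization at a flat; the flat of codimension `r` is
encoded by the `r`-dimensional subspace `U` of the dual space spanned by the
covectors of the hyperplanes containing it. -/
noncomputable def locHyps (A : Arrangement K ℓ) (U : Submodule K (Fin ℓ → K)) :
    Finset (Fin ℓ → K) :=
  A.hyps.filter (· ∈ U)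

/-- `U` encodes a flat of `A` of codimension `r` (an element of `L_r(A)`). -/
def IsFlatOfRank (A : Arrangement K ℓ) (U : Submodule K (Fin ℓ → K)) (r : ℕ) : Prop :=
  Module.finrank K U = r ∧ Submodule.span K (locHyps A U : Set (Fin ℓ → K)) = U

/-- The localization `A_X` of `A` at the flat encoded by `U`. -/
noncomputable def localize (A : Arrangement K ℓ) (U : Submodule K (Fin ℓ → K)) :
    Arrangement K ℓ where
  hyps := locHyps A U
  ne_zero := fun c hc => A.ne_zero c (Finset.mem_filter.mp hc).1
  nonparallel := fun c hc c' hc' =>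
    A.nonparallel c (Finset.mem_filter.mp hc).1 c' (Finset.mem_filter.mp hc').1

/-- `H₀` (given by covector `c₀`) is a heavy hyperplane of `(A,m)`. -/
def IsHeavy (A : Arrangement K ℓ) (m : (Fin ℓ → K) → ℕ) (c₀ : Fin ℓ → K) : Prop :=
  c₀ ∈ A.hyps ∧ (∑ c ∈ A.hyps.erase c₀, m c) ≤ m c₀

/-- `H₀` (given by covector `c₀`) is a locally heavy hyperplane of `(A,m)`. -/
def IsLocallyHeavy (A : Arrangement K ℓ) (m : (Fin ℓ → K) → ℕ) (c₀ : Fin ℓ → K) : Prop :=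
  c₀ ∈ A.hyps ∧ ∀ U : Submodule K (Fin ℓ → K), IsFlatOfRank A U 2 → c₀ ∈ U →
    3 ≤ (locHyps A U).card → (∑ c ∈ (locHyps A U).erase c₀, m c) ≤ m c₀

/-- `b` is the second Betti number of the rank-2 localization of `(A,m)` at `U`:
the product of the nonzero exponents of this free rank-2 multiarrangement. -/
def IsLocalB2 (A : Arrangement K ℓ) (m : (Fin ℓ → K) → ℕ)
    (U : Submodule K (Fin ℓ → K)) (b : ℕ) : Prop :=
  ∃ d : Fin ℓ → ℕ, IsFreeWithExp (localize A U) m d ∧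
    b = ∏ i ∈ Finset.univ.filter (fun i => d i ≠ 0), d i

/-- `b` is the second Betti number `b₂(A,m)` of the multiarrangement `(A,m)`. -/
def IsB2 (A : Arrangement K ℓ) (m : (Fin ℓ → K) → ℕ) (b : ℕ) : Prop :=
  ∃ bloc : Submodule K (Fin ℓ → K) → ℕ,
    (∀ U, IsFlatOfRank A U 2 → IsLocalB2 A m U (bloc U)) ∧
    b = ∑ᶠ U ∈ {U : Submodule K (Fin ℓ → K) | IsFlatOfRank A U 2}, bloc U

/-- The second Betti number of a simple arrangement:
`b₂(A) = Σ_{X ∈ L₂(A)} (|A_X| - 1)`. -/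
noncomputable def b2Simple (A : Arrangement K ℓ) : ℕ :=
  ∑ᶠ U ∈ {U : Submodule K (Fin ℓ → K) | IsFlatOfRank A U 2}, ((locHyps A U).card - 1)

/-- The Euler–Ziegler multiplicity of the restricted hyperplane `H₀ ∩ ker(c)` of
`A^{H₀}`: `m^{H₀}(X) = |m_X| - m(H₀)`. -/
noncomputable def EZmult (A : Arrangement K ℓ) (m : (Fin ℓ → K) → ℕ)
    (c₀ c : Fin ℓ → K) : ℕ :=
  (∑ c' ∈ A.hyps.filter (· ∈ Submodule.span K ({c₀, c} : Set (Fin ℓ → K))), m c') - m c₀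

/-- Two covectors are parallel (define the same hyperplane). -/
def Parallel {n : ℕ} (b b' : Fin n → K) : Prop := ∃ t : K, t ≠ 0 ∧ b' = t • b

/-- The covector on `K^n` obtained by restricting the covector `c` on `K^{n+1}` to the
hyperplane `ker c₀`, transported by the linear isomorphism `e : ker c₀ ≃ K^n`. -/
noncomputable def resCov {n : ℕ} (c₀ : Fin (n+1) → K)
    (e : ↥(LinearMap.ker (toFunc c₀)) ≃ₗ[K] (Fin n → K)) (c : Fin (n+1) → K) :
    Fin n → K :=
  fun j => toFunc c ((e.symm (Pi.single j 1) : ↥(LinearMap.ker (toFunc c₀))) : Fin (n+1) → K)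

/-- `(B, mB)` is (a model, in coordinates, of) the Euler–Ziegler restriction
`(A^{H₀}, m^{H₀})` of `(A,m)` to the hyperplane `H₀ = ker c₀ ∈ A`. -/
def IsEZRes {n : ℕ} (A : Arrangement K (n+1)) (m : (Fin (n+1) → K) → ℕ)
    (c₀ : Fin (n+1) → K) (B : Arrangement K n) (mB : (Fin n → K) → ℕ) : Prop :=
  c₀ ∈ A.hyps ∧
  ∃ e : ↥(LinearMap.ker (toFunc c₀)) ≃ₗ[K] (Fin n → K),
    (∀ c ∈ A.hyps.erase c₀, ∃ b ∈ B.hyps,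
        Parallel b (resCov c₀ e c) ∧ mB b = EZmult A m c₀ c) ∧
    (∀ b ∈ B.hyps, ∃ c ∈ A.hyps.erase c₀, Parallel b (resCov c₀ e c))

/-- A combinatorial equivalence between two arrangements: a bijection between the
hyperplanes inducing an isomorphism of intersection lattices (it preserves the rank
of every subset of hyperplanes). -/
def CombEquiv (A A' : Arrangement K ℓ) : Prop :=
  ∃ φ : (Fin ℓ → K) → (Fin ℓ → K), Set.BijOn φ ↑A.hyps ↑A'.hyps ∧
    ∀ T : Finset (Fin ℓ → K), T ⊆ A.hyps →
      Module.finrank K (Submodule.span K (T : Set (Fin ℓ → K))) =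
      Module.finrank K (Submodule.span K ((T.image φ) : Set (Fin ℓ → K)))

/-!
Write `x = α₀` and `R = S / x`. Let `θ ∈ D(A, m)` and let `X` be a codimension-two flat inside `H₀`.
For `α` vanishing on `X` and each other hyperplane `H ⊇ X`, the form `α` is a combination of `x` and
`α_H`, so `θ(α) ∈ (x ^ m₀, α_H ^ m(H))`. If there are several such `H`, then `m₀ ≥ ∑ m(H)`, and these
memberships combine to `θ(α) ∈ (x, ∏ α_H ^ m(H))`; so the restriction `θ̄` of `θ` to `H₀` lies in
`D(A^{H₀}, m^{H₀})`.

For a basis `θ_i` of `D(A, m)` write `θ_i(x) = x ^ m₀ g_i`. By Saito's criterion the coefficient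
determinant of the `θ_i` is the defining polynomial up to a unit; dividing by `x ^ m₀` and then
restricting to `H₀` shows, by Cramer's rule, that every pair in `R × D(A^{H₀}, m^{H₀})` is a unique
combination of the pairs `(ḡ_i, θ̄_i)`. Expanding `(1, 0)` shows that some `g_j` has nonzero
constant term, so it is a constant when the basis is homogeneous, and subtracting multiples of `θ_j`
yields a basis with `g_j = 1` and `g_i = 0` for `i ≠ j`. Expanding `(0, η)` for this basis involves
only the `θ̄_i` with `i ≠ j`.
-/

section CommutativeAlgebra

variable {ι R : Type*} [CommRing R]

theorem prod_prime_pow_dvd [IsDomain R] {p : ι → R} {m : ι → ℕ} {s : Finset ι} {z : R}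
    (hp : ∀ i ∈ s, Prime (p i))
    (h : ∀ i ∈ s, p i ^ (∑ j ∈ s with Associated (p i) (p j), m j) ∣ z) :
    ∏ i ∈ s, p i ^ m i ∣ z := by
  induction s using Finset.induction_on generalizing z with
  | empty => simp
  | insert a s ha ih =>
    have hpa : Prime (p a) := hp a (Finset.mem_insert_self a s)
    obtain ⟨w, rfl⟩ : p a ^ m a ∣ z :=
      (pow_dvd_pow _ (Finset.single_le_sum (by simp) (by simp))).trans
        (h a (Finset.mem_insert_self a s))
    rw [Finset.prod_insert ha]
    refine mul_dvd_mul_left _ (ih (fun i hi => hp i (Finset.mem_insert_of_mem hi)) fun i hi => ?_)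
    have hpi : Prime (p i) := hp i (Finset.mem_insert_of_mem hi)
    have hdvd := h i (Finset.mem_insert_of_mem hi)
    by_cases hia : Associated (p i) (p a)
    · rw [Finset.filter_insert, if_pos hia, Finset.sum_insert (by simp [ha]), pow_add] at hdvd
      exact (mul_dvd_mul_iff_left (pow_ne_zero _ hpa.ne_zero)).mp
        (((hia.symm.pow_pow (n := m a)).mul_right _).dvd.trans hdvd)
    · rw [Finset.filter_insert, if_neg hia] at hdvd
      refine hpi.pow_dvd_of_dvd_mul_left _ (fun hd => hia ?_) hdvd
      exact (hpi.dvd_prime_iff_associated hpa).mp (hpi.dvd_of_dvd_pow hd)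

theorem pow_mem_span_multiset_prod_pow {x y : R} {s : Multiset R} {k l : ℕ}
    (hs : ∀ z ∈ s, x ∈ Ideal.span {z, y}) (hk : s.card + l ≤ k + 1) :
    x ^ k ∈ Ideal.span {s.prod, y ^ l} := by
  induction k generalizing s l with
  | zero =>
    obtain hs0 | hl0 : s.card = 0 ∨ l = 0 := by omega
    · simp [Multiset.card_eq_zero.mp hs0, Ideal.span_insert]
    · simp [hl0, Ideal.span_insert]
  | succ k ih =>
    induction s using Multiset.induction_on with
    | empty => simp [Ideal.span_insert]
    | cons z s =>
      rcases l with _ | l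
      · simp [Ideal.span_insert]
      have hs' : ∀ w ∈ s, x ∈ Ideal.span {w, y} := fun w hw => hs w (Multiset.mem_cons_of_mem hw)
      rw [Multiset.card_cons] at hk
      obtain ⟨a, b, hx⟩ := Ideal.mem_span_pair.mp (hs z (Multiset.mem_cons_self z s))
      obtain ⟨a₁, b₁, h₁⟩ := Ideal.mem_span_pair.mp (ih hs' (l := l + 1) (by omega))
      obtain ⟨a₂, b₂, h₂⟩ := Ideal.mem_span_pair.mp
        (ih hs (l := l) (by rw [Multiset.card_cons]; omega))
      refine Ideal.mem_span_pair.mpr ⟨a * a₁ + b * y * a₂, a * z * b₁ + b * b₂, ?_⟩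
      rw [Multiset.prod_cons] at h₂ ⊢
      calc _ = a * z * (a₁ * s.prod + b₁ * y ^ (l + 1)) +
            b * y * (a₂ * (z * s.prod) + b₂ * y ^ l) := by ring
        _ = x ^ k * (a * z + b * y) := by rw [h₁, h₂]; ring
        _ = x ^ (k + 1) := by rw [hx, pow_succ]

theorem pow_mem_span_prod_pow {x y : R} {s : Finset ι} {z : ι → R} {m : ι → ℕ} {k l : ℕ}
    (hz : ∀ i ∈ s, x ∈ Ideal.span {z i, y}) (hk : ∑ i ∈ s, m i + l ≤ k + 1) :
    x ^ k ∈ Ideal.span {∏ i ∈ s, z i ^ m i, y ^ l} := by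
  have key := pow_mem_span_multiset_prod_pow (x := x) (y := y) (k := k) (l := l)
    (s := ∑ i ∈ s, Multiset.replicate (m i) (z i)) ?_ (by simpa [Multiset.card_sum] using hk)
  · simpa [Multiset.prod_sum] using key
  · intro w hw
    obtain ⟨i, hi, hw⟩ := Multiset.mem_sum.mp hw
    rw [Multiset.eq_of_mem_replicate hw]
    exact hz i hi

theorem mem_span_prod_pow_of_forall_mem_span_pow [DecompositionMonoid R] {x f : R} {s : Finset ι}
    {z : ι → R} {m : ι → ℕ} {n : ℕ} (hn : ∑ i ∈ s, m i ≤ n)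
    (hrel : (s : Set ι).Pairwise fun i j => IsRelPrime (z i) (z j))
    (hx : (s : Set ι).Pairwise fun i j => x ∈ Ideal.span {z i, z j})
    (hf : ∀ i ∈ s, f ∈ Ideal.span {x ^ n, z i ^ m i}) :
    f ∈ Ideal.span {x, ∏ i ∈ s, z i ^ m i} := by
  -- As in the Chinese remainder theorem: `e j` is `x ^ n` modulo `z j ^ m j` and `0` modulo the
  -- other factors; it can be taken divisible by `x` because `∑ i ∈ s, m i ≤ n`.
  have exists_approx (j) (hj : j ∈ s) : ∃ e, x ∣ e ∧ (∀ i ∈ s.erase j, z i ^ m i ∣ e) ∧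
      z j ^ m j ∣ x ^ n - e := by
    rw [← Finset.sum_erase_add s m hj] at hn
    rcases n with _ | n
    · exact ⟨0, dvd_zero x, fun i _ => dvd_zero _, by simp [show m j = 0 by omega]⟩
    obtain ⟨u, v, huv⟩ := Ideal.mem_span_pair.mp <| pow_mem_span_prod_pow (s := s.erase j) (x := x)
      (fun i hi => hx (Finset.mem_of_mem_erase hi) hj (Finset.ne_of_mem_erase hi)) hn
    refine ⟨x * (u * ∏ i ∈ s.erase j, z i ^ m i), dvd_mul_right _ _, fun i hi => ?_, x * v, ?_⟩
    · exact ((Finset.dvd_prod_of_mem _ hi).mul_left u).mul_left x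
    · rw [pow_succ, ← huv]
      ring
  choose! e hxe hze hje using exists_approx
  choose! b c hbc using fun i hi => Ideal.mem_span_pair.mp (hf i hi)
  have hdvd : ∏ i ∈ s, z i ^ m i ∣ f - ∑ i ∈ s, b i * e i := by
    refine Finset.prod_dvd_of_isRelPrime (fun i hi j hj hij => (hrel hi hj hij).pow) fun j hj => ?_
    rw [← Finset.sum_erase_add s _ hj, ← hbc j hj]
    have hother : z j ^ m j ∣ ∑ i ∈ s.erase j, b i * e i :=
      Finset.dvd_sum fun i hi => (hze i (Finset.mem_of_mem_erase hi) j
        (Finset.mem_erase.mpr ⟨(Finset.ne_of_mem_erase hi).symm, hj⟩)).mul_left _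
    have h := (((hje j hj).mul_left (b j)).add (dvd_mul_left _ (c j))).sub hother
    convert h using 1
    ring
  obtain ⟨q, hq⟩ := hdvd
  obtain ⟨r, hr⟩ : x ∣ ∑ i ∈ s, b i * e i := Finset.dvd_sum fun i hi => (hxe i hi).mul_left _
  refine Ideal.mem_span_pair.mpr ⟨r, q, ?_⟩
  linear_combination -hq - hr

end CommutativeAlgebra

section Matrices

open Matrix

theorem exists_dotProduct_eq_one {n K : Type*} [Fintype n] [Field K] {c : n → K} (hc : c ≠ 0) :
    ∃ v : n → K, v ⬝ᵥ c = 1 := by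
  obtain ⟨i, hi⟩ := Function.ne_iff.mp hc
  exact ⟨Pi.single i (c i)⁻¹, by rw [single_dotProduct, inv_mul_cancel₀ hi]⟩

variable {n R : Type*} [Fintype n] [DecidableEq n] [CommRing R]

/-- The endomorphism fixing the hyperplane `v ⬝ᵥ x = 0` pointwise and scaling `w` by `a`
(when `v ⬝ᵥ w = 1`). -/
def dilation (v w : n → R) (a : R) : Matrix n n R := 1 + (a - 1) • vecMulVec w v

theorem det_dilation {v w : n → R} (h : v ⬝ᵥ w = 1) (a : R) : (dilation v w a).det = a := by
  rw [dilation, ← smul_vecMulVec, vecMulVec_eq Unit, det_one_add_replicateCol_mul_replicateRow,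
    dotProduct_smul, h, smul_eq_mul, mul_one, add_sub_cancel]

theorem dilation_mulVec (v w x : n → R) (a : R) :
    dilation v w a *ᵥ x = x + ((a - 1) * v ⬝ᵥ x) • w := by
  rw [dilation, add_mulVec, one_mulVec, smul_mulVec, vecMulVec_mulVec, op_smul_eq_smul, smul_smul]

theorem det_eq_det_add_vecMulVec_mul {M : Matrix n n R} {v w g : n → R} {a : R}
    (hvw : v ⬝ᵥ w = 1) (h : M *ᵥ w = a • g) :
    M.det = (M + (1 - a) • vecMulVec g v).det * a := by
  have hM : M = (M + (1 - a) • vecMulVec g v) * dilation v w a := by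
    rw [dilation, mul_add, mul_one, mul_smul_comm, mul_vecMulVec, add_mulVec, h, smul_mulVec,
      vecMulVec_mulVec, hvw, op_smul_eq_smul, one_smul, add_vecMulVec, smul_vecMulVec,
      smul_vecMulVec]
    module
  conv_lhs => rw [hM]
  rw [det_mul, det_dilation hvw]

theorem dvd_det_of_dvd_mulVec {M : Matrix n n R} {v w : n → R} {a : R} (hvw : v ⬝ᵥ w = 1)
    (h : ∀ i, a ∣ (M *ᵥ w) i) : a ∣ M.det := by
  have hdet : M.det = v ⬝ᵥ (M.adjugate *ᵥ (M *ᵥ w)) := by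
    rw [mulVec_mulVec, adjugate_mul, smul_mulVec, one_mulVec, dotProduct_smul, hvw, smul_eq_mul,
      mul_one]
  rw [hdet]
  exact Finset.dvd_sum fun i _ => (Finset.dvd_sum fun j _ => (h j).mul_left _).mul_left _

theorem existsUnique_vecMul_eq [IsDomain R] {M : Matrix n n R} {r : n → R} (hM : M.det ≠ 0)
    (h : ∀ i, M.det ∣ (M.updateRow i r).det) : ∃! x, x ᵥ* M = r := by
  choose x hx using h
  have hcramer : Mᵀ.cramer r = M.det • x := by
    ext i
    rw [cramer_transpose_apply, hx, Pi.smul_apply, smul_eq_mul]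
  have hxr : x ᵥ* M = r := by
    apply smul_right_injective (n → R) hM
    beta_reduce
    rw [← mulVec_transpose, ← mulVec_smul, ← hcramer, mulVec_cramer, det_transpose]
  refine ⟨x, hxr, fun y hy => sub_eq_zero.mp (eq_zero_of_vecMul_eq_zero hM ?_)⟩
  rw [sub_vecMul, hy, hxr, sub_self]

end Matrices

section LinearForms

theorem linForm_add (c c' : Fin ℓ → K) : linForm (c + c') = linForm c + linForm c' := by
  simp [linForm, add_mul, Finset.sum_add_distrib]

theorem linForm_smul (t : K) (c : Fin ℓ → K) : linForm (t • c) = t • linForm c := by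
  simp [linForm, Finset.smul_sum, smul_eq_C_mul, mul_assoc]

/-- The linear map sending a covector to its linear form. -/
noncomputable def linFormHom : (Fin ℓ → K) →ₗ[K] S K ℓ where
  toFun := linForm
  map_add' := linForm_add
  map_smul' := linForm_smul

theorem linForm_zero : linForm (0 : Fin ℓ → K) = 0 := linFormHom.map_zero

theorem linForm_sub (c c' : Fin ℓ → K) : linForm (c - c') = linForm c - linForm c' :=
  linFormHom.map_sub c c'

theorem linForm_single (i : Fin ℓ) : linForm (Pi.single i (1 : K)) = X i := by
  rw [linForm, Finset.sum_eq_single i] <;> simp +contextual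

theorem isHomogeneous_linForm (c : Fin ℓ → K) : (linForm c).IsHomogeneous 1 :=
  IsHomogeneous.sum _ _ _ fun i _ => by
    simpa using (isHomogeneous_C (Fin ℓ) (c i)).mul (isHomogeneous_X K i)

theorem constantCoeff_linForm (c : Fin ℓ → K) : constantCoeff (linForm c) = 0 := by
  simp [linForm]

theorem map_linForm {M : Type*} [AddCommGroup M] [Module K M] (f : S K ℓ →ₗ[K] M)
    (c : Fin ℓ → K) : f (linForm c) = ∑ i, c i • f (X i) := by
  simp_rw [linForm, ← smul_eq_C_mul, map_sum, map_smul]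

theorem aeval_linForm {R : Type*} [CommRing R] [Algebra K R] (φ : (Fin ℓ → K) →ₗ[K] R)
    (c : Fin ℓ → K) : aeval (fun i => φ (Pi.single i 1)) (linForm c) = φ c := by
  conv_rhs => rw [← Finset.univ_sum_single c, map_sum]
  rw [← AlgHom.toLinearMap_apply, map_linForm]
  simp_rw [AlgHom.toLinearMap_apply, aeval_X, ← map_smul, ← Pi.single_smul, smul_eq_mul, mul_one]

theorem linForm_mem_span_image_iff {s : Set (Fin ℓ → K)} {c : Fin ℓ → K} :
    linForm c ∈ Ideal.span (linForm '' s) ↔ c ∈ Submodule.span K s := by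
  refine ⟨fun h => ?_, fun hc => ?_⟩
  · by_contra hc
    obtain ⟨φ, hφc, hφ⟩ := Submodule.exists_le_ker_of_notMem hc
    have hle : Ideal.span (linForm '' s) ≤
        RingHom.ker (aeval fun i => φ (Pi.single i 1) : S K ℓ →ₐ[K] K) := by
      rw [Ideal.span_le]
      rintro _ ⟨c', hc', rfl⟩
      exact (aeval_linForm φ c').trans (hφ (Submodule.subset_span hc'))
    exact hφc ((aeval_linForm φ c).symm.trans (hle h))
  · have hmem := Submodule.mem_map_of_mem (f := linFormHom) hc
    rw [Submodule.map_span] at hmem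
    exact Submodule.span_le_restrictScalars K (S K ℓ) _ hmem

theorem linForm_dvd_linForm_iff {c c' : Fin ℓ → K} :
    linForm c ∣ linForm c' ↔ c' ∈ Submodule.span K {c} := by
  rw [← linForm_mem_span_image_iff, Set.image_singleton, Ideal.mem_span_singleton]

theorem linForm_ne_zero {c : Fin ℓ → K} (hc : c ≠ 0) : linForm c ≠ 0 := by
  simpa [hc] using (linForm_mem_span_image_iff (s := ∅) (c := c)).not

theorem ker_eq_span_linForm_image_ker {π : (Fin ℓ → K) →ₗ[K] (Fin ℓ → K)}
    (hπ : IsIdempotentElem π) {φ : S K ℓ →ₐ[K] S K ℓ}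
    (hφ : ∀ c, φ (linForm c) = linForm (π c)) :
    RingHom.ker φ = Ideal.span (linForm '' (LinearMap.ker π : Set (Fin ℓ → K))) := by
  set I := Ideal.span (linForm '' (LinearMap.ker π : Set (Fin ℓ → K)))
  have hmod : (Ideal.Quotient.mkₐ K I).comp φ = Ideal.Quotient.mkₐ K I := by
    refine MvPolynomial.algHom_ext fun i => ?_
    rw [AlgHom.comp_apply, ← linForm_single, hφ]
    refine Ideal.Quotient.eq.mpr ?_
    rw [← linForm_sub]
    refine Ideal.subset_span ⟨_, ?_, rfl⟩
    rw [SetLike.mem_coe, LinearMap.mem_ker, map_sub, ← Module.End.mul_apply, hπ, sub_self]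
  refine le_antisymm (fun f hf => ?_) (Ideal.span_le.mpr ?_)
  · have hf' := DFunLike.congr_fun hmod f
    rw [AlgHom.comp_apply, RingHom.mem_ker.mp hf, map_zero] at hf'
    exact Ideal.Quotient.eq_zero_iff_mem.mp hf'.symm
  · rintro _ ⟨c, hc, rfl⟩
    rw [SetLike.mem_coe, RingHom.mem_ker, hφ, LinearMap.mem_ker.mp hc, linForm_zero]

theorem isPrime_span_linForm_image (s : Set (Fin ℓ → K)) :
    (Ideal.span (linForm '' s)).IsPrime := by
  obtain ⟨W, hW⟩ := Submodule.exists_isCompl (Submodule.span K s)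
  have hspan : Ideal.span (linForm '' s) =
      Ideal.span (linForm '' (Submodule.span K s : Set (Fin ℓ → K))) := by
    refine le_antisymm (Ideal.span_mono (Set.image_mono Submodule.subset_span))
      (Ideal.span_le.mpr ?_)
    rintro _ ⟨c, hc, rfl⟩
    exact linForm_mem_span_image_iff.mpr hc
  rw [hspan, ← W.ker_projection hW.symm,
    ← ker_eq_span_linForm_image_ker (W.isIdempotentElem_projection hW.symm)
      (aeval_linForm (linFormHom ∘ₗ W.projection _ hW.symm))]
  exact RingHom.ker_isPrime _

theorem prime_linForm {c : Fin ℓ → K} (hc : c ≠ 0) : Prime (linForm c) := by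
  rw [← Ideal.span_singleton_prime (linForm_ne_zero hc), ← Set.image_singleton]
  exact isPrime_span_linForm_image _

theorem isRelPrime_linForm {c c' : Fin ℓ → K} (hc : c ≠ 0) (h : c' ∉ Submodule.span K {c}) :
    IsRelPrime (linForm c) (linForm c') :=
  (prime_linForm hc).irreducible.isRelPrime_iff_not_dvd.mpr (linForm_dvd_linForm_iff.not.mpr h)

end LinearForms

section Saito

open scoped Matrix

variable {A : Arrangement K ℓ} {m : (Fin ℓ → K) → ℕ}

theorem Arrangement.notMem_span_singleton (A : Arrangement K ℓ) {c c' : Fin ℓ → K}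
    (hc : c ∈ A.hyps) (hc' : c' ∈ A.hyps) (hne : c ≠ c') : c' ∉ Submodule.span K {c} := by
  rw [Submodule.mem_span_singleton]
  rintro ⟨t, rfl⟩
  exact A.nonparallel c hc _ hc' hne t rfl

theorem Arrangement.isRelPrime_linForm (A : Arrangement K ℓ) {c c' : Fin ℓ → K}
    (hc : c ∈ A.hyps) (hc' : c' ∈ A.hyps) (hne : c ≠ c') :
    IsRelPrime (linForm c) (linForm c') :=
  ArrPaper.isRelPrime_linForm (A.ne_zero c hc) (A.notMem_span_singleton hc hc' hne)

/-- The defining polynomial `∏_{H} α_H^{m(H)}` of the multiarrangement of the hyperplanes in a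
finite set of covectors. -/
noncomputable def definingPoly (T : Finset (Fin ℓ → K)) (m : (Fin ℓ → K) → ℕ) : S K ℓ :=
  ∏ c ∈ T, linForm c ^ m c

theorem definingPoly_eq_mul_erase {T : Finset (Fin ℓ → K)} {c : Fin ℓ → K} (hc : c ∈ T) :
    definingPoly T m = definingPoly (T.erase c) m * linForm c ^ m c :=
  (Finset.prod_erase_mul T _ hc).symm

/-- The module `D(A, m)` of logarithmic derivations. -/
def logDerivations (A : Arrangement K ℓ) (m : (Fin ℓ → K) → ℕ) :
    Submodule (S K ℓ) (Der K ℓ) where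
  carrier := {θ | IsLogDer A m θ}
  zero_mem' _ _ := dvd_zero _
  add_mem' hθ hη c hc := dvd_add (hθ c hc) (hη c hc)
  smul_mem' p _ hθ c hc := (hθ c hc).mul_left p

theorem isLogDer_sum_smul {ι : Type*} {s : Finset ι} {θ : ι → Der K ℓ}
    (hθ : ∀ i ∈ s, IsLogDer A m (θ i)) (f : ι → S K ℓ) : IsLogDer A m (∑ i ∈ s, f i • θ i) :=
  (logDerivations A m).sum_mem fun i hi => (logDerivations A m).smul_mem (f i) (hθ i hi)

theorem sum_smul_derivation_apply {ι R : Type*} [CommRing R] [Algebra K R] (s : Finset ι)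
    (f : ι → R) (δ : ι → Derivation K R R) (x : R) :
    (∑ i ∈ s, f i • δ i) x = ∑ i ∈ s, f i * δ i x := by
  induction s using Finset.induction_on <;> simp_all

/-- The matrix of coefficients `θ_i(x_k)` of a family of derivations. -/
noncomputable def coeffMatrix (θ : Fin ℓ → Der K ℓ) : Matrix (Fin ℓ) (Fin ℓ) (S K ℓ) :=
  Matrix.of fun i k => θ i (X k)

theorem coeffMatrix_mulVec (θ : Fin ℓ → Der K ℓ) (c : Fin ℓ → K) :
    coeffMatrix θ *ᵥ (fun k => C (c k)) = fun i => θ i (linForm c) := by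
  ext1 i
  rw [← Derivation.coeFn_coe, map_linForm]
  simp_rw [smul_eq_C_mul, mul_comm (C _)]
  rfl

theorem coeffMatrix_mkDerivation (M : Matrix (Fin ℓ) (Fin ℓ) (S K ℓ)) :
    coeffMatrix (fun i => mkDerivation K (M.row i)) = M := by
  ext1 i k
  exact mkDerivation_X K (M i) k

theorem isLogDer_mkDerivation_iff {M : Matrix (Fin ℓ) (Fin ℓ) (S K ℓ)} :
    (∀ i, IsLogDer A m (mkDerivation K (M.row i))) ↔
      ∀ c ∈ A.hyps, ∀ i, linForm c ^ m c ∣ (M *ᵥ fun k => C (c k)) i := by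
  have happly (c : Fin ℓ → K) (i : Fin ℓ) :
      (M *ᵥ fun k => C (c k)) i = mkDerivation K (M.row i) (linForm c) := by
    rw [← congrFun (coeffMatrix_mulVec (fun i => mkDerivation K (M.row i)) c) i,
      coeffMatrix_mkDerivation]
  simp_rw [happly]
  exact ⟨fun h c hc i => h i c hc, fun h i c hc => h c hc i⟩

theorem exists_dotProduct_C_eq_one {c : Fin ℓ → K} (hc : c ≠ 0) :
    ∃ v : Fin ℓ → S K ℓ, v ⬝ᵥ (fun k => C (c k)) = 1 := by
  obtain ⟨v, hv⟩ := exists_dotProduct_eq_one hc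
  exact ⟨fun k => C (v k), by simpa [dotProduct] using congrArg (C : K → S K ℓ) hv⟩

theorem definingPoly_dvd_det_coeffMatrix {θ : Fin ℓ → Der K ℓ} (hθ : ∀ i, IsLogDer A m (θ i)) :
    definingPoly A.hyps m ∣ (coeffMatrix θ).det := by
  refine Finset.prod_dvd_of_isRelPrime
    (fun c hc c' hc' hne => (A.isRelPrime_linForm hc hc' hne).pow) fun c hc => ?_
  obtain ⟨v, hv⟩ := exists_dotProduct_C_eq_one (A.ne_zero c hc)
  refine dvd_det_of_dvd_mulVec hv fun i => ?_
  rw [coeffMatrix_mulVec]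
  exact hθ i c hc

namespace IsDerBasis

variable {θ : Fin ℓ → Der K ℓ}

theorem det_coeffMatrix_dvd_det (hθ : IsDerBasis A m θ) {M : Matrix (Fin ℓ) (Fin ℓ) (S K ℓ)}
    (hM : ∀ c ∈ A.hyps, ∀ i, linForm c ^ m c ∣ (M *ᵥ fun k => C (c k)) i) :
    (coeffMatrix θ).det ∣ M.det := by
  choose F hF using fun i => (hθ.2 _ (isLogDer_mkDerivation_iff.mpr hM i)).exists
  have hmul : M = Matrix.of F * coeffMatrix θ := by
    ext1 i k
    rw [← Matrix.row_apply M i k, ← mkDerivation_X K (M.row i) k, hF, sum_smul_derivation_apply]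
    rfl
  rw [hmul, Matrix.det_mul]
  exact dvd_mul_left _ _

theorem det_coeffMatrix_dvd_pow (hθ : IsDerBasis A m θ) :
    (coeffMatrix θ).det ∣ definingPoly A.hyps m ^ ℓ := by
  have hdet : (definingPoly A.hyps m • (1 : Matrix (Fin ℓ) (Fin ℓ) (S K ℓ))).det =
      definingPoly A.hyps m ^ ℓ := by
    simp
  rw [← hdet]
  refine hθ.det_coeffMatrix_dvd_det fun c hc i => ?_
  rw [Matrix.smul_mulVec]
  exact (Finset.dvd_prod_of_mem _ hc).mul_right _

theorem det_coeffMatrix_dvd_erase_pow_mul (hθ : IsDerBasis A m θ) {c : Fin ℓ → K}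
    (hc : c ∈ A.hyps) :
    (coeffMatrix θ).det ∣ definingPoly (A.hyps.erase c) m ^ ℓ * linForm c ^ m c := by
  obtain ⟨v, hv⟩ := exists_dotProduct_C_eq_one (A.ne_zero c hc)
  have hdet : (definingPoly (A.hyps.erase c) m •
        dilation v (fun k => C (c k)) (linForm c ^ m c)).det =
      definingPoly (A.hyps.erase c) m ^ ℓ * linForm c ^ m c := by
    rw [Matrix.det_smul, det_dilation hv, Fintype.card_fin]
  rw [← hdet]
  refine hθ.det_coeffMatrix_dvd_det fun c' hc' i => ?_
  rw [Matrix.smul_mulVec]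
  by_cases hcc' : c' = c
  · rw [hcc', dilation_mulVec, hv, mul_one, sub_smul, one_smul, add_sub_cancel]
    exact (dvd_mul_right _ _).mul_left _
  · exact (Finset.dvd_prod_of_mem (fun b => linForm b ^ m b)
      (Finset.mem_erase.mpr ⟨hcc', hc'⟩)).mul_right _

theorem associated_det_coeffMatrix (hθ : IsDerBasis A m θ) :
    Associated (definingPoly A.hyps m) (coeffMatrix θ).det := by
  obtain ⟨u, hu⟩ := definingPoly_dvd_det_coeffMatrix hθ.1
  have hrel (c) (hc : c ∈ A.hyps) : IsRelPrime u (linForm c) := by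
    have hdvd : u ∣ definingPoly (A.hyps.erase c) m ^ ℓ := by
      have h := hθ.det_coeffMatrix_dvd_erase_pow_mul hc
      rw [hu, definingPoly_eq_mul_erase hc, mul_right_comm] at h
      exact dvd_of_mul_left_dvd ((mul_dvd_mul_iff_right
        (pow_ne_zero _ (linForm_ne_zero (A.ne_zero c hc)))).mp h)
    have hrel_erase : IsRelPrime (definingPoly (A.hyps.erase c) m ^ ℓ) (linForm c) :=
      (IsRelPrime.prod_left fun c' hc' => (A.isRelPrime_linForm (Finset.mem_of_mem_erase hc') hc
        (Finset.ne_of_mem_erase hc')).pow_left).pow_left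
    exact fun p hpu hpc => hrel_erase (hpu.trans hdvd) hpc
  have hunit : IsUnit u := by
    have h : IsRelPrime u (definingPoly A.hyps m ^ ℓ) :=
      (IsRelPrime.prod_right fun c hc => (hrel c hc).pow_right).pow_right
    exact h.isUnit_of_dvd ((Dvd.intro_left _ hu.symm).trans hθ.det_coeffMatrix_dvd_pow)
  exact ⟨hunit.unit, by rw [hu, IsUnit.unit_spec]⟩

end IsDerBasis

end Saito

section Restriction

variable {A : Arrangement K ℓ} {m : (Fin ℓ → K) → ℕ} {c₀ c c' : Fin ℓ → K}

/-- The coordinate ring of the hyperplane `ker c₀`. -/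
def HypRing (c₀ : Fin ℓ → K) := S K ℓ ⧸ Ideal.span {linForm c₀}

noncomputable instance (c₀ : Fin ℓ → K) : CommRing (HypRing c₀) :=
  inferInstanceAs (CommRing (S K ℓ ⧸ Ideal.span {linForm c₀}))

noncomputable instance (c₀ : Fin ℓ → K) : Algebra K (HypRing c₀) :=
  inferInstanceAs (Algebra K (S K ℓ ⧸ Ideal.span {linForm c₀}))

/-- The restriction of polynomials to the hyperplane `ker c₀`. -/
noncomputable def res (c₀ : Fin ℓ → K) : S K ℓ →ₐ[K] HypRing c₀ := Ideal.Quotient.mkₐ K _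

theorem res_surjective (c₀ : Fin ℓ → K) : Function.Surjective (res c₀) :=
  Ideal.Quotient.mkₐ_surjective K _

theorem res_eq_zero_iff {p : S K ℓ} : res c₀ p = 0 ↔ linForm c₀ ∣ p :=
  Ideal.Quotient.eq_zero_iff_dvd _ _

theorem res_linForm_self (c₀ : Fin ℓ → K) : res c₀ (linForm c₀) = 0 := res_eq_zero_iff.mpr dvd_rfl

theorem res_dvd_res_iff {p q : S K ℓ} :
    res c₀ p ∣ res c₀ q ↔ q ∈ Ideal.span {linForm c₀, p} := by
  rw [Ideal.mem_span_pair]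
  constructor
  · rintro ⟨r, hr⟩
    obtain ⟨r, rfl⟩ := res_surjective c₀ r
    rw [← map_mul, ← sub_eq_zero, ← map_sub, res_eq_zero_iff] at hr
    obtain ⟨s, hs⟩ := hr
    exact ⟨s, r, by linear_combination -hs⟩
  · rintro ⟨s, r, rfl⟩
    rw [map_add, map_mul, res_linForm_self, mul_zero, zero_add]
    exact map_dvd _ (dvd_mul_left p r)

theorem res_linForm_dvd_iff :
    res c₀ (linForm c) ∣ res c₀ (linForm c') ↔ c' ∈ Submodule.span K {c₀, c} := by
  rw [res_dvd_res_iff, ← linForm_mem_span_image_iff, Set.image_pair]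

theorem isDomain_hypRing (h : c₀ ≠ 0) : IsDomain (HypRing c₀) := by
  have := (Ideal.span_singleton_prime (linForm_ne_zero h)).mpr (prime_linForm h)
  exact Ideal.Quotient.isDomain _

theorem prime_res_linForm (hc : c ∉ Submodule.span K {c₀}) : Prime (res c₀ (linForm c)) := by
  have hne : res c₀ (linForm c) ≠ 0 := res_eq_zero_iff.not.mpr (linForm_dvd_linForm_iff.not.mpr hc)
  have hprime : (Ideal.span {linForm c₀, linForm c}).IsPrime := by
    rw [← Set.image_pair]
    exact isPrime_span_linForm_image _
  have hmap := Ideal.map_isPrime_of_surjective (res_surjective c₀)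
    (I := Ideal.span {linForm c₀, linForm c})
    (fun p hp => Ideal.span_mono (by simp) (Ideal.mem_span_singleton.mpr (res_eq_zero_iff.mp hp)))
  rwa [Ideal.map_span, Set.image_pair, res_linForm_self, Ideal.span_insert_zero,
    Ideal.span_singleton_prime hne] at hmap

theorem associated_res_linForm_iff (h₀ : c₀ ≠ 0) (hc : c ∉ Submodule.span K {c₀})
    (hc' : c' ∉ Submodule.span K {c₀}) :
    Associated (res c₀ (linForm c)) (res c₀ (linForm c')) ↔ c' ∈ Submodule.span K {c₀, c} := by
  have := isDomain_hypRing h₀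
  rw [← res_linForm_dvd_iff,
    (prime_res_linForm hc).dvd_prime_iff_associated (prime_res_linForm hc')]

theorem exists_derivation_res {θ : Der K ℓ} (h : linForm c₀ ∣ θ (linForm c₀)) :
    ∃ δ : Derivation K (HypRing c₀) (HypRing c₀), ∀ p, δ (res c₀ p) = res c₀ (θ p) := by
  have hker (p : S K ℓ) (hp : res c₀ p = 0) : res c₀ (θ p) = 0 := by
    obtain ⟨q, rfl⟩ := res_eq_zero_iff.mp hp
    rw [res_eq_zero_iff, Derivation.leibniz]
    exact dvd_add (dvd_mul_right _ _) (h.mul_left q)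
  exact ⟨Derivation.liftOfSurjective (res_surjective c₀) hker,
    Derivation.liftOfSurjective_apply _ hker⟩

/-- The hyperplanes of `A` other than `ker c₀` that contain `ker c₀ ∩ ker c`. -/
noncomputable def Arrangement.pencil (A : Arrangement K ℓ) (c₀ c : Fin ℓ → K) :
    Finset (Fin ℓ → K) :=
  {c' ∈ A.hyps.erase c₀ | c' ∈ Submodule.span K {c₀, c}}

theorem Arrangement.mem_pencil_self (hc : c ∈ A.hyps.erase c₀) : c ∈ A.pencil c₀ c :=
  Finset.mem_filter.mpr ⟨hc, Submodule.subset_span (by simp)⟩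

theorem Arrangement.mem_hyps_of_mem_pencil (h : c' ∈ A.pencil c₀ c) : c' ∈ A.hyps :=
  Finset.mem_of_mem_erase (Finset.mem_filter.mp h).1

theorem Arrangement.notMem_span_of_mem_erase (h₀ : c₀ ∈ A.hyps) (hc : c ∈ A.hyps.erase c₀) :
    c ∉ Submodule.span K {c₀} :=
  A.notMem_span_singleton h₀ (Finset.mem_of_mem_erase hc) (Finset.ne_of_mem_erase hc).symm

theorem Arrangement.mem_span_of_mem_pencil (h₀ : c₀ ∈ A.hyps) (h : c' ∈ A.pencil c₀ c) :
    c ∈ Submodule.span K {c₀, c'} := by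
  obtain ⟨hc', hspan⟩ := Finset.mem_filter.mp h
  rw [Set.pair_comm] at hspan ⊢
  exact mem_span_insert_exchange hspan (notMem_span_of_mem_erase h₀ hc')

theorem Arrangement.mem_span_pair_of_mem_pencil (h₀ : c₀ ∈ A.hyps) {c₁ c₂ : Fin ℓ → K}
    (h₁ : c₁ ∈ A.pencil c₀ c) (h₂ : c₂ ∈ A.pencil c₀ c) (hne : c₁ ≠ c₂) :
    c₀ ∈ Submodule.span K {c₁, c₂} := by
  rw [Set.pair_comm]
  refine mem_span_insert_exchange ?_
    (A.notMem_span_singleton (mem_hyps_of_mem_pencil h₁) (mem_hyps_of_mem_pencil h₂) hne)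
  refine Submodule.span_le.mpr ?_ (Finset.mem_filter.mp h₂).2
  rintro _ (rfl | rfl)
  · exact Submodule.subset_span (by simp)
  · exact mem_span_of_mem_pencil h₀ h₁

theorem Arrangement.locHyps_erase_eq_pencil (A : Arrangement K ℓ) (c₀ c : Fin ℓ → K) :
    (locHyps A (Submodule.span K {c₀, c})).erase c₀ = A.pencil c₀ c :=
  (Finset.filter_erase _ _ _).symm

theorem Arrangement.mem_locHyps_span_pair (h₀ : c₀ ∈ A.hyps) :
    c₀ ∈ locHyps A (Submodule.span K {c₀, c}) :=
  Finset.mem_filter.mpr ⟨h₀, Submodule.subset_span (by simp)⟩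

theorem EZmult_eq_sum_pencil (h₀ : c₀ ∈ A.hyps) : EZmult A m c₀ c = ∑ c' ∈ A.pencil c₀ c, m c' := by
  rw [EZmult, ← Arrangement.locHyps_erase_eq_pencil, ← locHyps,
    ← Finset.add_sum_erase _ _ (A.mem_locHyps_span_pair h₀), Nat.add_sub_cancel_left]

theorem isFlatOfRank_span_pair (h₀ : c₀ ∈ A.hyps) (hc : c ∈ A.hyps.erase c₀) :
    IsFlatOfRank A (Submodule.span K {c₀, c}) 2 := by
  refine ⟨?_, le_antisymm (Submodule.span_le.mpr fun c' hc' => (Finset.mem_filter.mp hc').2)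
    (Submodule.span_mono ?_)⟩
  · have hli : LinearIndependent K ![c₀, c] :=
      (LinearIndependent.pair_iff' (A.ne_zero c₀ h₀)).mpr fun t ht =>
        A.notMem_span_of_mem_erase h₀ hc (Submodule.mem_span_singleton.mpr ⟨t, ht⟩)
    have hrank := finrank_span_eq_card hli
    rwa [Matrix.range_cons_cons_empty, Fintype.card_fin] at hrank
  · rintro c' (rfl | rfl)
    · exact Arrangement.mem_locHyps_span_pair h₀
    · exact Finset.mem_filter.mpr ⟨Finset.mem_of_mem_erase hc, Submodule.subset_span (by simp)⟩

theorem IsLocallyHeavy.sum_pencil_le (hlh : IsLocallyHeavy A m c₀) (hc : c ∈ A.hyps.erase c₀)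
    (hcard : 2 ≤ (A.pencil c₀ c).card) : ∑ c' ∈ A.pencil c₀ c, m c' ≤ m c₀ := by
  rw [← Arrangement.locHyps_erase_eq_pencil] at hcard ⊢
  refine hlh.2 _ (isFlatOfRank_span_pair hlh.1 hc) (Submodule.subset_span (by simp)) ?_
  rw [← Finset.card_erase_add_one (Arrangement.mem_locHyps_span_pair hlh.1)]
  omega

theorem IsLogDer.apply_linForm_mem_span {θ : Der K ℓ} (hθ : IsLogDer A m θ) {c₁ c₂ : Fin ℓ → K}
    (h₁ : c₁ ∈ A.hyps) (h₂ : c₂ ∈ A.hyps) (hc : c ∈ Submodule.span K {c₁, c₂}) :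
    θ (linForm c) ∈ Ideal.span {linForm c₁ ^ m c₁, linForm c₂ ^ m c₂} := by
  obtain ⟨a, b, rfl⟩ := Submodule.mem_span_pair.mp hc
  obtain ⟨p, hp⟩ := hθ c₁ h₁
  obtain ⟨q, hq⟩ := hθ c₂ h₂
  refine Ideal.mem_span_pair.mpr ⟨C a * p, C b * q, ?_⟩
  rw [linForm_add, linForm_smul, linForm_smul, map_add, Derivation.map_smul, Derivation.map_smul,
    hp, hq, smul_eq_C_mul, smul_eq_C_mul]
  ring

theorem IsLogDer.apply_linForm_mem_span_definingPoly_pencil {θ : Der K ℓ} (hθ : IsLogDer A m θ)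
    (hlh : IsLocallyHeavy A m c₀) (hc : c ∈ A.hyps.erase c₀) :
    θ (linForm c) ∈ Ideal.span {linForm c₀, definingPoly (A.pencil c₀ c) m} := by
  have hcP := A.mem_pencil_self hc
  by_cases hcard : 2 ≤ (A.pencil c₀ c).card
  · refine mem_span_prod_pow_of_forall_mem_span_pow (hlh.sum_pencil_le hc hcard) ?_ ?_ ?_
    · exact fun c₁ h₁ c₂ h₂ hne => A.isRelPrime_linForm (A.mem_hyps_of_mem_pencil h₁)
        (A.mem_hyps_of_mem_pencil h₂) hne
    · intro c₁ h₁ c₂ h₂ hne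
      rw [← Set.image_pair, linForm_mem_span_image_iff]
      exact A.mem_span_pair_of_mem_pencil hlh.1 h₁ h₂ hne
    · exact fun c' hc' => hθ.apply_linForm_mem_span hlh.1 (A.mem_hyps_of_mem_pencil hc')
        (A.mem_span_of_mem_pencil hlh.1 hc')
  · have hP : A.pencil c₀ c = {c} := Finset.eq_singleton_iff_unique_mem.mpr
      ⟨hcP, fun c' hc' => Finset.card_le_one.mp (by omega) c' hc' c hcP⟩
    rw [hP, definingPoly, Finset.prod_singleton]
    exact Ideal.span_mono (by simp)
      (Ideal.mem_span_singleton.mpr (hθ c (Finset.mem_of_mem_erase hc)))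

/-- `η` belongs to the module `D(A^{H₀}, m^{H₀})` of the Euler–Ziegler restriction to
`H₀ = ker c₀`. -/
def IsRestrictedLogDer (A : Arrangement K ℓ) (m : (Fin ℓ → K) → ℕ) (c₀ : Fin ℓ → K)
    (η : Derivation K (HypRing c₀) (HypRing c₀)) : Prop :=
  ∀ c ∈ A.hyps.erase c₀, res c₀ (linForm c) ^ EZmult A m c₀ c ∣ η (res c₀ (linForm c))

theorem IsLogDer.isRestrictedLogDer {θ : Der K ℓ} (hθ : IsLogDer A m θ)
    (hlh : IsLocallyHeavy A m c₀) {δ : Derivation K (HypRing c₀) (HypRing c₀)}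
    (hδ : ∀ p, δ (res c₀ p) = res c₀ (θ p)) : IsRestrictedLogDer A m c₀ δ := by
  intro c hc
  rw [hδ, EZmult_eq_sum_pencil hlh.1, ← Finset.prod_pow_eq_pow_sum]
  refine dvd_trans ?_
    (res_dvd_res_iff.mpr (hθ.apply_linForm_mem_span_definingPoly_pencil hlh hc))
  rw [definingPoly, map_prod]
  refine Finset.prod_dvd_prod_of_dvd _ _ fun c' hc' => ?_
  rw [map_pow]
  exact pow_dvd_pow_of_dvd (res_linForm_dvd_iff.mpr (Finset.mem_filter.mp hc').2) _

end Restriction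

section RestrictedBasis

open scoped Matrix

variable {A : Arrangement K ℓ} {m : (Fin ℓ → K) → ℕ} {c₀ c : Fin ℓ → K} {v : Fin ℓ → K}

theorem hypRing_derivation_ext {η η' : Derivation K (HypRing c₀) (HypRing c₀)}
    (h : ∀ k, η (res c₀ (X k)) = η' (res c₀ (X k))) : η = η' := by
  let _ : Algebra (S K ℓ) (HypRing c₀) := (res c₀).toAlgebra
  have := IsScalarTower.of_algHom (res c₀)
  have hcomp : η.compAlgebraMap (S K ℓ) = η'.compAlgebraMap (S K ℓ) :=
    MvPolynomial.derivation_ext h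
  ext x
  obtain ⟨p, rfl⟩ := res_surjective c₀ x
  exact DFunLike.congr_fun hcomp p

/-- The coordinates of a pair of a function and a derivation on `ker c₀`. When `v ⬝ᵥ c₀ = 1`, these
are the coefficients of `η + a • ∂_v`, a derivation along `ker c₀` with values in the ambient
tangent space. -/
noncomputable def coordVec (c₀ v : Fin ℓ → K) :
    HypRing c₀ × Derivation K (HypRing c₀) (HypRing c₀) →ₗ[HypRing c₀] Fin ℓ → HypRing c₀ where
  toFun p k := algebraMap K _ (v k) * p.1 + p.2 (res c₀ (X k))
  map_add' p q := by
    ext1 k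
    simp only [Prod.fst_add, Prod.snd_add, Derivation.add_apply, Pi.add_apply]
    ring
  map_smul' a p := by
    ext1 k
    simp only [Prod.smul_fst, Prod.smul_snd, Derivation.smul_apply, Pi.smul_apply, smul_eq_mul,
      RingHom.id_apply]
    ring

theorem coordVec_dotProduct (v : Fin ℓ → K)
    (p : HypRing c₀ × Derivation K (HypRing c₀) (HypRing c₀)) (c : Fin ℓ → K) :
    coordVec c₀ v p ⬝ᵥ (algebraMap K _ ∘ c) =
      algebraMap K _ (v ⬝ᵥ c) * p.1 + p.2 (res c₀ (linForm c)) := by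
  have hlin := map_linForm ((p.2 : HypRing c₀ →ₗ[K] HypRing c₀) ∘ₗ (res c₀).toLinearMap) c
  simp only [LinearMap.comp_apply, Derivation.coeFn_coe, AlgHom.toLinearMap_apply] at hlin
  rw [hlin, dotProduct, dotProduct, map_sum, Finset.sum_mul, ← Finset.sum_add_distrib]
  refine Finset.sum_congr rfl fun k _ => ?_
  simp only [Algebra.smul_def, coordVec, LinearMap.coe_mk, AddHom.coe_mk, Function.comp_apply,
    map_mul]
  ring

theorem coordVec_injective (hv : v ⬝ᵥ c₀ = 1) : Function.Injective (coordVec c₀ v) := by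
  refine (injective_iff_map_eq_zero _).mpr fun p hp => ?_
  have hfst : p.1 = 0 := by
    have h := coordVec_dotProduct v p c₀
    rw [hp, zero_dotProduct, hv, map_one, one_mul, res_linForm_self, map_zero, add_zero] at h
    exact h.symm
  refine Prod.ext hfst (hypRing_derivation_ext fun k => ?_)
  have h := congrFun hp k
  simpa only [coordVec, LinearMap.coe_mk, AddHom.coe_mk, hfst, mul_zero, zero_add,
    Prod.snd_zero, Derivation.coe_zero, Pi.zero_apply] using h

theorem exists_coordVec_dotProduct_eq (hv : v ⬝ᵥ c₀ = 1) (hc : c ∉ Submodule.span K {c₀}) :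
    ∃ u w : Fin ℓ → HypRing c₀, u ⬝ᵥ w = 1 ∧
      ∀ p, coordVec c₀ v p ⬝ᵥ w = p.2 (res c₀ (linForm c)) := by
  have hne : c - (v ⬝ᵥ c) • c₀ ≠ 0 := fun h =>
    hc (Submodule.mem_span_singleton.mpr ⟨_, (sub_eq_zero.mp h).symm⟩)
  obtain ⟨u, hu⟩ := exists_dotProduct_eq_one hne
  refine ⟨algebraMap K _ ∘ u, algebraMap K _ ∘ (c - (v ⬝ᵥ c) • c₀), ?_, fun p => ?_⟩
  · rw [← RingHom.map_dotProduct, hu, map_one]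
  · have hv0 : v ⬝ᵥ (c - (v ⬝ᵥ c) • c₀) = 0 := by
      rw [dotProduct_sub, dotProduct_smul, hv, smul_eq_mul, mul_one, sub_self]
    have hres : res c₀ (linForm (c - (v ⬝ᵥ c) • c₀)) = res c₀ (linForm c) := by
      rw [linForm_sub, linForm_smul, map_sub, map_smul, res_linForm_self, smul_zero, sub_zero]
    rw [coordVec_dotProduct, hv0, map_zero, zero_mul, zero_add, hres]

theorem sum_associated_eq_EZmult (h₀ : c₀ ∈ A.hyps) (hc : c ∈ A.hyps.erase c₀)
    [DecidablePred fun c' => Associated (res c₀ (linForm c)) (res c₀ (linForm c'))] :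
    ∑ c' ∈ A.hyps.erase c₀ with Associated (res c₀ (linForm c)) (res c₀ (linForm c')), m c' =
      EZmult A m c₀ c := by
  rw [EZmult_eq_sum_pencil h₀, Arrangement.pencil]
  refine Finset.sum_congr (Finset.filter_congr fun c' hc' => ?_) fun _ _ => rfl
  exact associated_res_linForm_iff (A.ne_zero c₀ h₀) (A.notMem_span_of_mem_erase h₀ hc)
    (A.notMem_span_of_mem_erase h₀ hc')

theorem res_definingPoly_ne_zero (h₀ : c₀ ∈ A.hyps) :
    res c₀ (definingPoly (A.hyps.erase c₀) m) ≠ 0 := by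
  have := isDomain_hypRing (A.ne_zero c₀ h₀)
  rw [definingPoly, map_prod]
  refine Finset.prod_ne_zero_iff.mpr fun c hc => ?_
  rw [map_pow]
  exact pow_ne_zero _ (prime_res_linForm (A.notMem_span_of_mem_erase h₀ hc)).ne_zero

theorem res_definingPoly_dvd_det_coordVec (h₀ : c₀ ∈ A.hyps) (hv : v ⬝ᵥ c₀ = 1)
    {p : Fin ℓ → HypRing c₀ × Derivation K (HypRing c₀) (HypRing c₀)}
    (hp : ∀ i, IsRestrictedLogDer A m c₀ (p i).2) :
    res c₀ (definingPoly (A.hyps.erase c₀) m) ∣ (Matrix.of fun i => coordVec c₀ v (p i)).det := by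
  have := isDomain_hypRing (A.ne_zero c₀ h₀)
  rw [definingPoly, map_prod]
  simp_rw [map_pow]
  refine prod_prime_pow_dvd
    (fun c hc => prime_res_linForm (A.notMem_span_of_mem_erase h₀ hc)) fun c hc => ?_
  rw [sum_associated_eq_EZmult h₀ hc]
  obtain ⟨u, w, huw, hw⟩ :=
    exists_coordVec_dotProduct_eq hv (A.notMem_span_of_mem_erase h₀ hc)
  refine dvd_det_of_dvd_mulVec huw fun i => ?_
  exact (hp i c hc).trans (hw (p i)).symm.dvd

variable {θ : Fin ℓ → Der K ℓ} {g : Fin ℓ → S K ℓ}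
  {δ : Fin ℓ → Derivation K (HypRing c₀) (HypRing c₀)}

theorem IsDerBasis.associated_det_coordVec (hθ : IsDerBasis A m θ) (h₀ : c₀ ∈ A.hyps)
    (hm : 0 < m c₀) (hv : v ⬝ᵥ c₀ = 1)
    (hg : ∀ i, θ i (linForm c₀) = linForm c₀ ^ m c₀ * g i)
    (hδ : ∀ i p, δ i (res c₀ p) = res c₀ (θ i p)) :
    Associated (res c₀ (definingPoly (A.hyps.erase c₀) m))
      (Matrix.of fun i => coordVec c₀ v (res c₀ (g i), δ i)).det := by
  let N := coeffMatrix θ + (1 - linForm c₀ ^ m c₀) • Matrix.vecMulVec g (fun k => C (v k))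
  have hdet : (coeffMatrix θ).det = N.det * linForm c₀ ^ m c₀ := by
    refine det_eq_det_add_vecMulVec_mul (w := fun k => C (c₀ k)) ?_ ?_
    · exact (RingHom.map_dotProduct C v c₀).symm.trans (by rw [hv, map_one])
    · rw [coeffMatrix_mulVec]
      exact funext hg
  have hN : Associated (definingPoly (A.hyps.erase c₀) m) N.det := by
    have h := hθ.associated_det_coeffMatrix
    rw [hdet, definingPoly_eq_mul_erase h₀] at h
    exact h.of_mul_right (.refl _) (pow_ne_zero _ (linForm_ne_zero (A.ne_zero c₀ h₀)))
  have hres : (res c₀).mapMatrix N = Matrix.of fun i => coordVec c₀ v (res c₀ (g i), δ i) := by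
    ext1 i k
    have hC : res c₀ (C (v k)) = algebraMap K _ (v k) := (res c₀).commutes (v k)
    simp only [N, AlgHom.mapMatrix_apply, Matrix.map_apply, Matrix.add_apply, Matrix.smul_apply,
      Matrix.vecMulVec_apply, smul_eq_mul, map_add, map_mul, map_sub, map_one, map_pow,
      res_linForm_self, zero_pow hm.ne', sub_zero, one_mul, hC, coeffMatrix, Matrix.of_apply,
      coordVec, LinearMap.coe_mk, AddHom.coe_mk, hδ]
    ring
  rw [← hres, ← AlgHom.map_det]
  exact hN.map (res c₀)

theorem IsDerBasis.existsUnique_sum_smul_prod_eq (hθ : IsDerBasis A m θ)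
    (hlh : IsLocallyHeavy A m c₀) (hm : 0 < m c₀)
    (hg : ∀ i, θ i (linForm c₀) = linForm c₀ ^ m c₀ * g i)
    (hδ : ∀ i p, δ i (res c₀ p) = res c₀ (θ i p)) {a : HypRing c₀}
    {η : Derivation K (HypRing c₀) (HypRing c₀)} (hη : IsRestrictedLogDer A m c₀ η) :
    ∃! F : Fin ℓ → HypRing c₀, ∑ i, F i • (res c₀ (g i), δ i) = (a, η) := by
  have := isDomain_hypRing (A.ne_zero c₀ hlh.1)
  obtain ⟨v, hv⟩ := exists_dotProduct_eq_one (A.ne_zero c₀ hlh.1)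
  let p : Fin ℓ → HypRing c₀ × Derivation K (HypRing c₀) (HypRing c₀) :=
    fun i => (res c₀ (g i), δ i)
  let M := Matrix.of fun i => coordVec c₀ v (p i)
  have hM : Associated (res c₀ (definingPoly (A.hyps.erase c₀) m)) M.det :=
    hθ.associated_det_coordVec hlh.1 hm hv hg hδ
  have hvecMul (F : Fin ℓ → HypRing c₀) :
      F ᵥ* M = coordVec c₀ v (a, η) ↔ ∑ i, F i • p i = (a, η) := by
    rw [Matrix.vecMul_eq_sum, ← (coordVec_injective hv).eq_iff, map_sum]
    simp_rw [map_smul]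
    rfl
  refine (existsUnique_congr hvecMul).mp (existsUnique_vecMul_eq
    (hM.ne_zero_iff.mp (res_definingPoly_ne_zero hlh.1)) fun i => hM.symm.dvd.trans ?_)
  have hrow : M.updateRow i (coordVec c₀ v (a, η)) =
      Matrix.of fun k => coordVec c₀ v (Function.update p i (a, η) k) := by
    ext1 k
    rcases eq_or_ne k i with rfl | hki <;> simp [M, *]
  rw [hrow]
  refine res_definingPoly_dvd_det_coordVec hlh.1 hv fun k => ?_
  rcases eq_or_ne k i with rfl | hki
  · rwa [Function.update_self]
  · rw [Function.update_of_ne hki]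
    exact (hθ.1 k).isRestrictedLogDer hlh (hδ k)

end RestrictedBasis

section Homogeneous

variable {σ R : Type*} [CommSemiring R] {p q : MvPolynomial σ R} {k n : ℕ}

theorem homogeneousComponent_add_mul_of_isHomogeneous (hp : p.IsHomogeneous k) (e : ℕ) :
    homogeneousComponent (k + e) (p * q) = p * homogeneousComponent e q := by
  let := gradedAlgebra (σ := σ) (R := R)
  have h := DirectSum.coe_decompose_mul_add_of_left_mem (homogeneousSubmodule σ R) (i := k)
    (j := e) (b := q) ((mem_homogeneousSubmodule k p).mpr hp)
  rwa [← decomposition.decompose'_apply, ← decomposition.decompose'_apply]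

theorem exists_isHomogeneous_of_mul [NoZeroDivisors R] (hp : p.IsHomogeneous k) (hp0 : p ≠ 0)
    (hpq : (p * q).IsHomogeneous n) (hq : q ≠ 0) : ∃ e, k + e = n ∧ q.IsHomogeneous e := by
  have hzero (e : ℕ) (he : k + e ≠ n) : homogeneousComponent e q = 0 := by
    have h := homogeneousComponent_add_mul_of_isHomogeneous (q := q) hp e
    rw [homogeneousComponent_of_mem hpq, if_neg he] at h
    exact (mul_eq_zero.mp h.symm).resolve_left hp0
  obtain ⟨e, he⟩ : ∃ e, homogeneousComponent e q ≠ 0 := by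
    by_contra! hall
    exact hq (by rw [← sum_homogeneousComponent q]; exact Finset.sum_eq_zero fun e _ => hall e)
  have hke : k + e = n := by_contra fun h => he (hzero e h)
  refine ⟨e, hke, ?_⟩
  rw [← sum_homogeneousComponent q]
  refine IsHomogeneous.sum _ _ _ fun e' _ => ?_
  by_cases hee : e' = e
  · exact hee ▸ homogeneousComponent_isHomogeneous e' q
  · rw [hzero e' (by omega)]
    exact isHomogeneous_zero _ _ _

theorem degree_eq_zero_of_constantCoeff_ne_zero (hp : p.IsHomogeneous n)
    (h : constantCoeff p ≠ 0) : n = 0 := by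
  by_contra hn
  exact h (hp.coeff_eq_zero (by simpa using Ne.symm hn))

end Homogeneous

section AdaptedBasis

variable {A : Arrangement K ℓ} {m : (Fin ℓ → K) → ℕ} {c₀ : Fin ℓ → K} {θ : Fin ℓ → Der K ℓ}
  {g : Fin ℓ → S K ℓ}

theorem IsDerBasis.exists_constantCoeff_ne_zero (hθ : IsDerBasis A m θ)
    (hlh : IsLocallyHeavy A m c₀) (hm : 0 < m c₀)
    (hg : ∀ i, θ i (linForm c₀) = linForm c₀ ^ m c₀ * g i) : ∃ j, constantCoeff (g j) ≠ 0 := by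
  choose δ hδ using fun i => exists_derivation_res
    ((dvd_pow_self _ hm.ne').trans (hθ.1 i c₀ hlh.1))
  have hzero : IsRestrictedLogDer A m c₀ 0 := fun c _ => dvd_zero _
  obtain ⟨F, hF, -⟩ := hθ.existsUnique_sum_smul_prod_eq hlh hm hg hδ (a := 1) hzero
  choose f hf using fun i => res_surjective c₀ (F i)
  have hres : res c₀ (1 - ∑ i, f i * g i) = 0 := by
    have h := congrArg Prod.fst hF
    simp only [Prod.fst_sum, Prod.smul_fst, smul_eq_mul] at h
    simp only [map_sub, map_one, map_sum, map_mul, hf, h, sub_self]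
  by_contra! hall
  have hdvd := map_dvd constantCoeff (res_eq_zero_iff.mp hres)
  simp [constantCoeff_linForm, hall] at hdvd

theorem IsDerBasis.of_isUnit_det (hθ : IsDerBasis A m θ) {P : Matrix (Fin ℓ) (Fin ℓ) (S K ℓ)}
    (hP : IsUnit P.det) : IsDerBasis A m fun i => ∑ k, P i k • θ k := by
  have hPunit := P.isUnit_iff_isUnit_det.mpr hP
  refine ⟨fun i => isLogDer_sum_smul (fun k _ => hθ.1 k) _, fun η hη => ?_⟩
  have hsum (f : Fin ℓ → S K ℓ) :
      ∑ i, f i • ∑ k, P i k • θ k = ∑ k, Matrix.vecMul f P k • θ k := by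
    simp_rw [Finset.smul_sum, smul_smul, Matrix.vecMul, dotProduct, Finset.sum_smul]
    exact Finset.sum_comm
  simp_rw [hsum]
  exact (Function.Bijective.existsUnique_iff ⟨Matrix.vecMul_injective_of_isUnit hPunit,
    Matrix.vecMul_surjective_iff_isUnit.mpr hPunit⟩).mp (hθ.2 η hη)

theorem IsDerBasis.add_smul_of_isUnit (hθ : IsDerBasis A m θ) {w : Fin ℓ → S K ℓ} {j : Fin ℓ}
    (hw : IsUnit (1 + w j)) : IsDerBasis A m fun i => θ i + w i • θ j := by
  let P : Matrix (Fin ℓ) (Fin ℓ) (S K ℓ) := 1 + Matrix.vecMulVec w (Pi.single j 1)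
  have hdet : P.det = 1 + w j := by
    change (1 + Matrix.vecMulVec w (Pi.single j 1)).det = _
    rw [Matrix.vecMulVec_eq Unit, Matrix.det_one_add_replicateCol_mul_replicateRow,
      single_dotProduct, one_mul]
  convert hθ.of_isUnit_det (hdet ▸ hw) using 2 with i
  simp [P, Matrix.one_apply, Matrix.vecMulVec_apply, add_smul, Finset.sum_add_distrib,
    Pi.single_apply]

theorem exists_isHomogeneous_of_apply_linForm_eq (h₀ : c₀ ≠ 0) {n k : ℕ} {θ : Der K ℓ}
    {g : S K ℓ} (hθ : IsHomogOfDeg θ n) (hg : θ (linForm c₀) = linForm c₀ ^ k * g) (hg0 : g ≠ 0) :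
    ∃ e, k + e = n ∧ g.IsHomogeneous e := by
  have hpow : (linForm c₀ ^ k).IsHomogeneous k := by
    simpa using (isHomogeneous_linForm c₀).pow k
  exact exists_isHomogeneous_of_mul hpow (pow_ne_zero k (linForm_ne_zero h₀)) (hg ▸ hθ c₀) hg0

theorem IsHomogOfDeg.add_smul {θ η : Der K ℓ} {w : S K ℓ} {n k e : ℕ} (hθ : IsHomogOfDeg θ n)
    (hη : IsHomogOfDeg η k) (hw : w.IsHomogeneous e) (hn : e + k = n) :
    IsHomogOfDeg (θ + w • η) n :=
  fun c => (hθ c).add (hn ▸ hw.mul (hη c))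

theorem IsDerBasis.exists_adapted (hθ : IsDerBasis A m θ) (hlh : IsLocallyHeavy A m c₀)
    (hm : 0 < m c₀) {d : Fin ℓ → ℕ} (hd : ∀ i, IsHomogOfDeg (θ i) (d i)) :
    ∃ (θ' : Fin ℓ → Der K ℓ) (j : Fin ℓ), (∀ i, IsHomogOfDeg (θ' i) (d i)) ∧ IsDerBasis A m θ' ∧
      ∀ i, θ' i (linForm c₀) = linForm c₀ ^ m c₀ * (Pi.single j 1 : Fin ℓ → S K ℓ) i := by
  have h₀ := A.ne_zero c₀ hlh.1
  choose g hg using fun i => hθ.1 i c₀ hlh.1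
  have hgd (i : Fin ℓ) := exists_isHomogeneous_of_apply_linForm_eq h₀ (hd i) (hg i)
  obtain ⟨j, hj⟩ := hθ.exists_constantCoeff_ne_zero hlh hm hg
  obtain ⟨t, ht, hgj, hdj⟩ : ∃ t : K, t ≠ 0 ∧ g j = C t ∧ d j = m c₀ := by
    obtain ⟨e, hde, hge⟩ := hgd j fun h => hj (by rw [h, map_zero])
    obtain rfl := degree_eq_zero_of_constantCoeff_ne_zero hge hj
    exact ⟨_, hj, totalDegree_eq_zero_iff_eq_C.mp (Nat.le_zero.mp hge.totalDegree_le), hde.symm⟩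
  let w : Fin ℓ → S K ℓ := fun i => C t⁻¹ * ((Pi.single j 1 : Fin ℓ → S K ℓ) i - g i)
  have htt : (C t⁻¹ * C t : S K ℓ) = 1 := by rw [← C_mul, inv_mul_cancel₀ ht, C_1]
  have hunit : IsUnit (1 + w j) := by
    rw [show 1 + w j = C t⁻¹ by
      simp only [w, Pi.single_eq_same, hgj]
      linear_combination -htt]
    exact (IsUnit.mk0 _ (inv_ne_zero ht)).map C
  refine ⟨fun i => θ i + w i • θ j, j, fun i => ?_, hθ.add_smul_of_isUnit hunit, fun i => ?_⟩
  · by_cases hgi : g i = 0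
    · have hij : i ≠ j := by
        rintro rfl
        exact hj (by rw [hgi, map_zero])
      simpa [w, hij, hgi] using hd i
    obtain ⟨e, hde, hge⟩ := hgd i hgi
    have hsingle : ((Pi.single j 1 : Fin ℓ → S K ℓ) i).IsHomogeneous e := by
      rcases eq_or_ne i j with rfl | hij
      · obtain rfl : e = 0 := by omega
        simpa using isHomogeneous_one (Fin ℓ) K
      · simpa [hij] using isHomogeneous_zero (Fin ℓ) K e
    refine (hd i).add_smul (hd j) ((isHomogeneous_C _ _).mul (hsingle.sub hge)) ?_
    omega
  · rw [Derivation.add_apply, Derivation.smul_apply, hg, hg, hgj, smul_eq_mul]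
    linear_combination (linForm c₀ ^ m c₀ * ((Pi.single j 1 : Fin ℓ → S K ℓ) i - g i)) * htt

end AdaptedBasis

section RestrictionBasis

variable {R ι M : Type*} [Ring R] [AddCommGroup M] [Module R M] [Fintype ι] [DecidableEq ι]

theorem existsUnique_sum_smul_subtype_ne {δ : ι → M} {η : M} {j : ι}
    (h : ∃! F : ι → R, ∑ i, F i • ((Pi.single j 1 : ι → R) i, δ i) = (0, η)) :
    ∃! f : {i // i ≠ j} → R, η = ∑ i, f i • δ i := by
  have hiff (F : ι → R) : ∑ i, F i • ((Pi.single j 1 : ι → R) i, δ i) = (0, η) ↔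
      F j = 0 ∧ η = ∑ i : {i // i ≠ j}, F i • δ i := by
    simp only [Prod.smul_mk, Prod.ext_iff, Prod.fst_sum, Prod.snd_sum, Pi.single_apply,
      smul_eq_mul, mul_ite, mul_one, mul_zero, Finset.sum_ite_eq', Finset.mem_univ, if_true]
    refine and_congr_right fun hFj => ?_
    rw [Fintype.sum_eq_add_sum_subtype_ne _ j, hFj, zero_smul, zero_add, eq_comm]
  simp_rw [hiff] at h
  obtain ⟨F, hF, huniq⟩ := h
  refine ⟨fun i => F i, hF.2, fun f hf => ?_⟩
  let G : ι → R := fun i => if hi : i = j then 0 else f ⟨i, hi⟩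
  have hG (i : {i // i ≠ j}) : G i = f i := dif_neg i.2
  have hGF := huniq G ⟨dif_pos rfl, by simpa only [hG] using hf⟩
  ext1 i
  rw [← hG, hGF]

end RestrictionBasis

set_option maxHeartbeats 1000000 in
set_option synthInstance.maxHeartbeats 400000 in
theorem stmt19 (A : Arrangement K ℓ) (m : (Fin ℓ → K) → ℕ)
    (hm : ∀ c ∈ A.hyps, 0 < m c) (c₀ : Fin ℓ → K) (hlh : IsLocallyHeavy A m c₀)
    (hfree : IsFree A m) :
    ∃ (θ : Fin ℓ → Der K ℓ) (d : Fin ℓ → ℕ),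
      (∀ i, IsHomogOfDeg (θ i) (d i)) ∧ IsDerBasis A m θ ∧
      ∃ j : Fin ℓ, θ j (linForm c₀) = (linForm c₀) ^ (m c₀) ∧
        (∀ i, i ≠ j → θ i (linForm c₀) = 0) ∧
        ∃ θbar : {i : Fin ℓ // i ≠ j} →
            Derivation K (S K ℓ ⧸ (Ideal.span {linForm c₀}))
              (S K ℓ ⧸ (Ideal.span {linForm c₀})),
          (∀ i (p : S K ℓ),
            θbar i (Ideal.Quotient.mk (Ideal.span {linForm c₀}) p)
              = Ideal.Quotient.mk (Ideal.span {linForm c₀}) (θ i.val p)) ∧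
          (∀ i, ∀ c ∈ A.hyps.erase c₀,
            (Ideal.Quotient.mk (Ideal.span {linForm c₀}) (linForm c)) ^ (EZmult A m c₀ c) ∣
              θbar i (Ideal.Quotient.mk (Ideal.span {linForm c₀}) (linForm c))) ∧
          (∀ η : Derivation K (S K ℓ ⧸ (Ideal.span {linForm c₀}))
              (S K ℓ ⧸ (Ideal.span {linForm c₀})),
            (∀ c ∈ A.hyps.erase c₀,
              (Ideal.Quotient.mk (Ideal.span {linForm c₀}) (linForm c)) ^ (EZmult A m c₀ c) ∣
                η (Ideal.Quotient.mk (Ideal.span {linForm c₀}) (linForm c))) →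
            ∃! f : {i : Fin ℓ // i ≠ j} → (S K ℓ ⧸ (Ideal.span {linForm c₀})),
              η = ∑ i, f i • θbar i) := by
  obtain ⟨d, θ₀, hd₀, hθ₀⟩ := hfree
  have hm₀ : 0 < m c₀ := hm c₀ hlh.1
  obtain ⟨θ, j, hd, hθ, hg⟩ := hθ₀.exists_adapted hlh hm₀ hd₀
  choose δ hδ using fun i => exists_derivation_res
    ((dvd_pow_self _ hm₀.ne').trans (hθ.1 i c₀ hlh.1))
  refine ⟨θ, d, hd, hθ, j, by simp [hg], fun i hij => by simp [hg, hij], fun i => δ i,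
    fun i => hδ i, fun i => (hθ.1 i).isRestrictedLogDer hlh (hδ i), fun η hη => ?_⟩
  have hpairs := hθ.existsUnique_sum_smul_prod_eq hlh hm₀ hg hδ (a := 0) hη
  simp_rw [Pi.apply_single (fun _ => res c₀) (fun _ => map_zero _), map_one] at hpairs
  exact existsUnique_sum_smul_subtype_ne hpairs

end ArrPaper
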